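/- arXiv:1006.4088 — 2 statements merged into one kernel-verified Lean document; each statement's English description precedes it below -/
import Mathlib

section
/- Let A and B be matrices of the same dimensions. If A Bᵀ = 0 and Aᵀ B = 0, then ‖A + B‖_* = ‖A‖_* + ‖B‖_*. -/
open scoped BigOperators

noncomputable section

/-- Frobenius norm of a real matrix. -/
def frobNorm {n₁ n₂ : ℕ} (X : Matrix (Fin n₁) (Fin n₂) ℝ) : ℝ :=
  Real.sqrt (∑ i, ∑ j, (X i j) ^ 2)

/-- Singular values of a real matrix: square roots of eigenvalues of `X * Xᴴ`. -/
def singVals {n₁ n₂ : ℕ} (X : Matrix (Fin n₁) (Fin n₂) ℝ) : Fin n₁ → ℝ :=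
  fun i => Real.sqrt ((Matrix.isHermitian_mul_conjTranspose_self X).eigenvalues i)

/-- Nuclear norm: sum of singular values. -/
def nuclearNorm {n₁ n₂ : ℕ} (X : Matrix (Fin n₁) (Fin n₂) ℝ) : ℝ :=
  ∑ i, singVals X i

/-- Operator norm: largest singular value. -/
def matOpNorm {n₁ n₂ : ℕ} (X : Matrix (Fin n₁) (Fin n₂) ℝ) : ℝ :=
  ⨆ i, singVals X i

/-- ℓ*-rank. -/
def lstarRank {n₁ n₂ : ℕ} (X : Matrix (Fin n₁) (Fin n₂) ℝ) : ℝ :=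
  nuclearNorm X ^ 2 / frobNorm X ^ 2

/-- Euclidean norm of a vector. -/
def vnorm {m : ℕ} (v : Fin m → ℝ) : ℝ :=
  Real.sqrt (∑ k, (v k) ^ 2)

/-- Matrix inner product. -/
def matInner {n₁ n₂ : ℕ} (X Y : Matrix (Fin n₁) (Fin n₂) ℝ) : ℝ :=
  (X.transpose * Y).trace

def cmsvMin {n₁ n₂ m : ℕ} (A : Matrix (Fin n₁) (Fin n₂) ℝ → (Fin m → ℝ)) (τ : ℝ) : ℝ :=
  sInf {c | ∃ X : Matrix (Fin n₁) (Fin n₂) ℝ, X ≠ 0 ∧ lstarRank X ≤ τ ∧ c = vnorm (A X) / frobNorm X}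

def cmsvMax {n₁ n₂ m : ℕ} (A : Matrix (Fin n₁) (Fin n₂) ℝ → (Fin m → ℝ)) (τ : ℝ) : ℝ :=
  sSup {c | ∃ X : Matrix (Fin n₁) (Fin n₂) ℝ, X ≠ 0 ∧ lstarRank X ≤ τ ∧ c = vnorm (A X) / frobNorm X}

def rcsvMin {n₁ n₂ m : ℕ} (A : Matrix (Fin n₁) (Fin n₂) ℝ → (Fin m → ℝ)) (r : ℕ) : ℝ :=
  sInf {c | ∃ X : Matrix (Fin n₁) (Fin n₂) ℝ, X ≠ 0 ∧ X.rank ≤ r ∧ c = vnorm (A X) / frobNorm X}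

def rcsvMax {n₁ n₂ m : ℕ} (A : Matrix (Fin n₁) (Fin n₂) ℝ → (Fin m → ℝ)) (r : ℕ) : ℝ :=
  sSup {c | ∃ X : Matrix (Fin n₁) (Fin n₂) ℝ, X ≠ 0 ∧ X.rank ≤ r ∧ c = vnorm (A X) / frobNorm X}

def mRIC {n₁ n₂ m : ℕ} (A : Matrix (Fin n₁) (Fin n₂) ℝ → (Fin m → ℝ)) (r : ℕ) : ℝ :=
  sInf {δ : ℝ | 0 < δ ∧ ∀ X : Matrix (Fin n₁) (Fin n₂) ℝ, X ≠ 0 → X.rank ≤ r →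
    1 - δ ≤ (vnorm (A X)) ^ 2 / (frobNorm X) ^ 2 ∧ (vnorm (A X)) ^ 2 / (frobNorm X) ^ 2 ≤ 1 + δ}

def opOf {n₁ n₂ m : ℕ} (A : Fin m → Matrix (Fin n₁) (Fin n₂) ℝ) :
    Matrix (Fin n₁) (Fin n₂) ℝ → (Fin m → ℝ) :=
  fun X k => matInner (A k) X

/-!
The nuclear norm of `X` is the trace of `√(X Xᴴ)`. When `A Bᴴ = 0` the cross terms of
`(A + B) (A + B)ᴴ` vanish, leaving `A Aᴴ + B Bᴴ`, and when `Aᴴ B = 0` these two positive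
summands have product zero. The square root is multiplicative on commuting positive elements, so
`√(A Aᴴ)` and `√(B Bᴴ)` also have product zero; their sum then squares to `A Aᴴ + B Bᴴ`.
Hence the square root, and with it the trace, is additive.
-/

section SquareRoot

variable {R : Type*} [NonUnitalRing R] [StarRing R] [PartialOrder R] [StarOrderedRing R]
  [Module ℝ R] [SMulCommClass ℝ R R] [IsScalarTower ℝ R R]
  [TopologicalSpace R] [IsTopologicalRing R] [T2Space R]
  [NonUnitalContinuousFunctionalCalculus ℝ R IsSelfAdjoint] [NonnegSpectrumClass ℝ R]
  {a b : R}

theorem cfcSqrt_mul_of_commute (ha : 0 ≤ a) (hb : 0 ≤ b) (hab : Commute a b) :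
    CFC.sqrt (a * b) = CFC.sqrt a * CFC.sqrt b := by
  have hsqrt : Commute (CFC.sqrt a) (CFC.sqrt b) :=
    ((hab.cfcₙ_nnreal NNReal.sqrt).symm.cfcₙ_nnreal NNReal.sqrt).symm
  refine CFC.sqrt_unique ?_ (hsqrt.mul_nonneg (CFC.sqrt_nonneg a) (CFC.sqrt_nonneg b))
  calc CFC.sqrt a * CFC.sqrt b * (CFC.sqrt a * CFC.sqrt b)
      = CFC.sqrt a * CFC.sqrt a * (CFC.sqrt b * CFC.sqrt b) := hsqrt.symm.mul_mul_mul_comm _ _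
    _ = a * b := by rw [CFC.sqrt_mul_sqrt_self a, CFC.sqrt_mul_sqrt_self b]

theorem cfcSqrt_mul_cfcSqrt_eq_zero (ha : 0 ≤ a) (hb : 0 ≤ b) (hab : a * b = 0) :
    CFC.sqrt a * CFC.sqrt b = 0 := by
  have hcomm : Commute a b := ha.isSelfAdjoint.commute_of_mul_eq_zero hb.isSelfAdjoint hab
  rw [← cfcSqrt_mul_of_commute ha hb hcomm, hab, CFC.sqrt_zero]

theorem cfcSqrt_add_of_mul_eq_zero (ha : 0 ≤ a) (hb : 0 ≤ b) (hab : a * b = 0) :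
    CFC.sqrt (a + b) = CFC.sqrt a + CFC.sqrt b := by
  have hba : b * a = 0 :=
    (ha.isSelfAdjoint.commute_of_mul_eq_zero hb.isSelfAdjoint hab).eq.symm.trans hab
  refine CFC.sqrt_unique ?_ (add_nonneg (CFC.sqrt_nonneg a) (CFC.sqrt_nonneg b))
  calc (CFC.sqrt a + CFC.sqrt b) * (CFC.sqrt a + CFC.sqrt b)
      = CFC.sqrt a * CFC.sqrt a + CFC.sqrt b * CFC.sqrt b := by
        rw [add_mul, mul_add, mul_add, cfcSqrt_mul_cfcSqrt_eq_zero ha hb hab,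
          cfcSqrt_mul_cfcSqrt_eq_zero hb ha hba, add_zero, zero_add]
    _ = a + b := by rw [CFC.sqrt_mul_sqrt_self a, CFC.sqrt_mul_sqrt_self b]

end SquareRoot

section TraceNorm

open scoped Matrix MatrixOrder ComplexOrder

theorem add_mul_conjTranspose_add_of_mul_conjTranspose_eq_zero {α m n : Type*}
    [NonUnitalSemiring α] [StarRing α] [Fintype n] {A B : Matrix m n α} (hAB : A * Bᴴ = 0) :
    (A + B) * (A + B)ᴴ = A * Aᴴ + B * Bᴴ := by
  have hBA : B * Aᴴ = 0 := by simpa using congrArg Matrix.conjTranspose hAB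
  rw [Matrix.conjTranspose_add, Matrix.add_mul, Matrix.mul_add, Matrix.mul_add, hAB, hBA,
    add_zero, zero_add]

variable {𝕜 m n : Type*} [RCLike 𝕜] [Fintype m] [DecidableEq m] [Fintype n]

theorem trace_cfc_eq_sum_eigenvalues {A : Matrix m m 𝕜} (hA : A.IsHermitian) (f : ℝ → ℝ) :
    (cfc f A).trace = ∑ i, (f (hA.eigenvalues i) : 𝕜) := by
  rw [hA.cfc_eq, Matrix.IsHermitian.cfc, Unitary.conjStarAlgAut_apply, Matrix.trace_mul_comm,
    ← mul_assoc, Unitary.coe_star_mul_self, one_mul, Matrix.trace_diagonal]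
  simp only [Function.comp_apply]

theorem trace_cfcSqrt_eq_sum_sqrt_eigenvalues {A : Matrix m m 𝕜} (hA : A.PosSemidef) :
    (CFC.sqrt A).trace = ∑ i, (√(hA.isHermitian.eigenvalues i) : 𝕜) := by
  rw [CFC.sqrt_eq_real_sqrt A hA.nonneg, cfcₙ_eq_cfc, trace_cfc_eq_sum_eigenvalues hA.isHermitian]

/-- The trace norm (Schatten 1-norm): the sum of the singular values, encoded as the square roots
of the eigenvalues of `X * Xᴴ`. It is `nuclearNorm` for arbitrary finite index types and for real
or complex entries. -/
def traceNorm (X : Matrix m n 𝕜) : ℝ :=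
  ∑ i, √((Matrix.isHermitian_mul_conjTranspose_self X).eigenvalues i)

theorem coe_traceNorm_eq_trace_cfcSqrt (X : Matrix m n 𝕜) :
    (traceNorm X : 𝕜) = (CFC.sqrt (X * Xᴴ)).trace := by
  rw [trace_cfcSqrt_eq_sum_sqrt_eigenvalues (Matrix.posSemidef_self_mul_conjTranspose X), traceNorm,
    RCLike.ofReal_sum]

theorem stmt3_general (A B : Matrix m n 𝕜) (hrow : A * Bᴴ = 0) (hcol : Aᴴ * B = 0) :
    traceNorm (A + B) = traceNorm A + traceNorm B := by
  have hprod : A * Aᴴ * (B * Bᴴ) = 0 := by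
    rw [Matrix.mul_assoc, ← Matrix.mul_assoc Aᴴ, hcol, Matrix.zero_mul, Matrix.mul_zero]
  have hsqrt : CFC.sqrt ((A + B) * (A + B)ᴴ) = CFC.sqrt (A * Aᴴ) + CFC.sqrt (B * Bᴴ) := by
    rw [add_mul_conjTranspose_add_of_mul_conjTranspose_eq_zero hrow]
    exact cfcSqrt_add_of_mul_eq_zero (Matrix.posSemidef_self_mul_conjTranspose A).nonneg
      (Matrix.posSemidef_self_mul_conjTranspose B).nonneg hprod
  apply RCLike.ofReal_injective (K := 𝕜)
  rw [RCLike.ofReal_add, coe_traceNorm_eq_trace_cfcSqrt, coe_traceNorm_eq_trace_cfcSqrt,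
    coe_traceNorm_eq_trace_cfcSqrt, hsqrt, Matrix.trace_add]

end TraceNorm

theorem nuclearNorm_eq_traceNorm {n₁ n₂ : ℕ} (X : Matrix (Fin n₁) (Fin n₂) ℝ) :
    nuclearNorm X = traceNorm X :=
  rfl

/-- if `A Bᵀ = 0` and `Aᵀ B = 0` then `‖A + B‖_* = ‖A‖_* + ‖B‖_*`. -/
theorem stmt3 {n₁ n₂ : ℕ} (A B : Matrix (Fin n₁) (Fin n₂) ℝ)
    (h₁ : A * B.transpose = 0) (h₂ : A.transpose * B = 0) :
    nuclearNorm (A + B) = nuclearNorm A + nuclearNorm B := by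
  simp only [← Matrix.conjTranspose_eq_transpose_of_trivial] at h₁ h₂
  simpa only [nuclearNorm_eq_traceNorm] using stmt3_general A B h₁ h₂

end
end

section
/- Let A and B be matrices of the same dimensions. Then there exist matrices B₁ and B₂ of the same dimensions such that: (1) B = B₁ + B₂; (2) rank(B₁) ≤ 2·rank(A); (3) A B₂ᵀ = 0 and Aᵀ B₂ = 0; (4) ⟨B₁, B₂⟩ = 0. -/
open scoped BigOperators

noncomputable section

/-
Let `P` and `Q` be the orthogonal projections onto the ranges of `A` and `Aᴴ`, and put
`B₂ = (1 - P) B (1 - Q)`. Then `Aᴴ B₂ = 0` and `A B₂ᴴ = 0`, while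
`B₁ = B - B₂ = P B + (1 - P) B Q` has rank at most `rank P + rank Q = 2 rank A`.
Since `X ↦ (1 - P) X (1 - Q)` is an orthogonal projection for the Frobenius inner product,
`B₁` is orthogonal to `B₂`.
-/

section

open scoped Matrix

theorem isStarProjection_of_star_mul_self_eq_star {R : Type*} [Mul R] [StarMul R] {p : R}
    (hp : star p * p = star p) : IsStarProjection p := by
  have hself : star p = p := by
    simpa only [hp, star_star] using (IsSelfAdjoint.star_mul_self p).star_eq.symm
  exact ⟨by rwa [hself] at hp, hself⟩

theorem exists_matrix_mul_eq_of_range_mulVecLin_le {R l m n : Type*} [CommSemiring R] [Fintype m]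
    [Fintype n] {M : Matrix l m R} {N : Matrix l n R}
    (h : N.mulVecLin.range ≤ M.mulVecLin.range) : ∃ X : Matrix m n R, M * X = N := by
  classical
  have hcol (j : n) : ∃ x, M *ᵥ x = N.col j := by
    rw [← Matrix.mulVec_single_one]
    exact h (LinearMap.mem_range_self N.mulVecLin (Pi.single j 1))
  choose x hx using hcol
  exact ⟨(Matrix.of x)ᵀ, Matrix.ext fun i j => congrFun (hx j) i⟩

theorem matrix_rank_add_le {K m n : Type*} [Field K] [Fintype n] (A B : Matrix m n K) :
    (A + B).rank ≤ A.rank + B.rank := by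
  have hrange : (A + B).mulVecLin.range ≤ A.mulVecLin.range ⊔ B.mulVecLin.range := by
    rw [Matrix.mulVecLin_add]
    exact LinearMap.range_add_le _ _
  exact (Submodule.finrank_mono hrange).trans
    (Submodule.finrank_add_le_finrank_add_finrank _ _)

theorem matrix_rank_sub_one_sub_mul_mul_one_sub_le {K m n : Type*} [Field K] [Fintype m]
    [Fintype n] [DecidableEq m] [DecidableEq n] (P : Matrix m m K) (Q : Matrix n n K)
    (B : Matrix m n K) : (B - (1 - P) * B * (1 - Q)).rank ≤ P.rank + Q.rank := by
  have hsplit : B - (1 - P) * B * (1 - Q) = P * B + (1 - P) * B * Q := by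
    rw [Matrix.mul_sub, Matrix.mul_one, Matrix.sub_mul, Matrix.one_mul]
    abel
  calc (B - (1 - P) * B * (1 - Q)).rank
      ≤ (P * B).rank + ((1 - P) * B * Q).rank := hsplit ▸ matrix_rank_add_le _ _
    _ ≤ P.rank + Q.rank :=
        add_le_add (Matrix.rank_mul_le_left _ _) (Matrix.rank_mul_le_right _ _)

theorem trace_conjTranspose_sub_mul_mul_eq_zero {R m n : Type*} [CommRing R] [StarRing R]
    [Fintype m] [Fintype n] {E : Matrix m m R} {F : Matrix n n R} (hE : IsStarProjection E)
    (hF : IsStarProjection F) (B : Matrix m n R) :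
    ((B - E * B * F)ᴴ * (E * B * F)).trace = 0 := by
  have hconj : (E * B * F)ᴴ = F * (Bᴴ * E) := by
    rw [Matrix.conjTranspose_mul, Matrix.conjTranspose_mul, ← Matrix.star_eq_conjTranspose E,
      ← Matrix.star_eq_conjTranspose F, hE.isSelfAdjoint.star_eq, hF.isSelfAdjoint.star_eq]
  have hnorm : ((E * B * F)ᴴ * (E * B * F)).trace = (Bᴴ * (E * B * F)).trace := calc
    _ = (F * (Bᴴ * (E * E) * B * F)).trace := by rw [hconj]; simp only [Matrix.mul_assoc]
    _ = (Bᴴ * E * B * (F * F)).trace := by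
        rw [Matrix.trace_mul_comm, hE.isIdempotentElem.eq]; simp only [Matrix.mul_assoc]
    _ = (Bᴴ * (E * B * F)).trace := by
        rw [hF.isIdempotentElem.eq]; simp only [Matrix.mul_assoc]
  rw [Matrix.conjTranspose_sub, Matrix.sub_mul, Matrix.trace_sub, hnorm, sub_self]

section StarOrderedField

variable {K m n : Type*} [Field K] [PartialOrder K] [StarRing K] [StarOrderedRing K]
  [Fintype m] [Fintype n]

theorem range_mulVecLin_conjTranspose_mul_self (A : Matrix m n K) :
    (Aᴴ * A).mulVecLin.range = Aᴴ.mulVecLin.range := by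
  apply Submodule.eq_of_le_of_finrank_eq
  · rw [Matrix.mulVecLin_mul]
    exact LinearMap.range_comp_le_range _ _
  · exact (Matrix.rank_conjTranspose_mul_self A).trans (Matrix.rank_conjTranspose A).symm

theorem exists_isStarProjection_conjTranspose_mul_eq (A : Matrix m n K) :
    ∃ P : Matrix m m K, IsStarProjection P ∧ Aᴴ * P = Aᴴ ∧ P.rank = A.rank := by
  -- The columns of `X` solve the normal equations, so `A * X` projects onto the range of `A`.
  obtain ⟨X, hX⟩ := exists_matrix_mul_eq_of_range_mulVecLin_le
    (range_mulVecLin_conjTranspose_mul_self A).ge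
  rw [Matrix.mul_assoc] at hX
  refine ⟨A * X, isStarProjection_of_star_mul_self_eq_star ?_, hX, le_antisymm ?_ ?_⟩
  · rw [Matrix.star_eq_conjTranspose, Matrix.conjTranspose_mul, Matrix.mul_assoc, hX]
  · exact Matrix.rank_mul_le_left A X
  · calc A.rank = (Aᴴ * (A * X)).rank := by rw [hX, Matrix.rank_conjTranspose]
      _ ≤ (A * X).rank := Matrix.rank_mul_le_right _ _

theorem stmt4_general (A B : Matrix m n K) :
    ∃ B₁ B₂ : Matrix m n K, B = B₁ + B₂ ∧ B₁.rank ≤ 2 * A.rank ∧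
      A * B₂ᴴ = 0 ∧ Aᴴ * B₂ = 0 ∧ (B₁ᴴ * B₂).trace = 0 := by
  classical
  obtain ⟨P, hP, hAP, hP_rank⟩ := exists_isStarProjection_conjTranspose_mul_eq A
  obtain ⟨Q, hQ, hAQ, hQ_rank⟩ := exists_isStarProjection_conjTranspose_mul_eq Aᴴ
  rw [Matrix.conjTranspose_conjTranspose] at hAQ
  rw [Matrix.rank_conjTranspose] at hQ_rank
  have hA_left : Aᴴ * (1 - P) = 0 := by rw [Matrix.mul_sub, Matrix.mul_one, hAP, sub_self]
  have hA_right : A * (1 - Q) = 0 := by rw [Matrix.mul_sub, Matrix.mul_one, hAQ, sub_self]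
  have hQ_conj : (1 - Q)ᴴ = 1 - Q := hQ.one_sub.isSelfAdjoint
  refine ⟨B - (1 - P) * B * (1 - Q), (1 - P) * B * (1 - Q), (sub_add_cancel _ _).symm, ?_, ?_, ?_,
    trace_conjTranspose_sub_mul_mul_eq_zero hP.one_sub hQ.one_sub B⟩
  · simpa only [hP_rank, hQ_rank, ← two_mul] using
      matrix_rank_sub_one_sub_mul_mul_one_sub_le P Q B
  · rw [Matrix.conjTranspose_mul, hQ_conj, ← Matrix.mul_assoc, hA_right, Matrix.zero_mul]
  · rw [Matrix.mul_assoc, ← Matrix.mul_assoc, hA_left, Matrix.zero_mul]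

end StarOrderedField

end

/-- the matrix decomposition lemma. -/
theorem stmt4 {n₁ n₂ : ℕ} (A B : Matrix (Fin n₁) (Fin n₂) ℝ) :
    ∃ B₁ B₂ : Matrix (Fin n₁) (Fin n₂) ℝ,
      B = B₁ + B₂ ∧ B₁.rank ≤ 2 * A.rank ∧
      A * B₂.transpose = 0 ∧ A.transpose * B₂ = 0 ∧ matInner B₁ B₂ = 0 := by
  simpa only [matInner, Matrix.conjTranspose_eq_transpose_of_trivial] using stmt4_general A B

end
end
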